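/- arXiv:1003.3396 — 2 statements merged into one kernel-verified Lean document; each statement's English description precedes it below -/
import Mathlib

section
/- Let Q(t) be a discrete time queue with Q(t+1) = max[Q(t) − b(t), 0] + a(t), where a(t) ≥ 0 and b(t) is real-valued, defined on a probability space. Suppose Q(t) is rate stable, and suppose there exist finite constants ε > 0 and C > 0 such that E[(a(t) + b⁻(t))^{1+ε}] ≤ C for all t, where b⁻(t) = −min[b(t), 0]. Then Q(t) is mean rate stable. -/
open MeasureTheory Filter Finset ENNReal

theorem aux_pt (ε K x : ℝ) (hε : 0 < ε) (hK : 0 < K) (hx : 0 ≤ x) :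
    x ≤ K + K ^ (-ε) * x ^ (1 + ε) := by
  have h0 : 0 ≤ K ^ (-ε) * x ^ (1 + ε) := by positivity
  rcases le_or_gt x K with h | h
  · linarith
  · have hx' : 0 < x := hK.trans h
    have h1 : x ^ (-ε) ≤ K ^ (-ε) :=
      Real.rpow_le_rpow_of_nonpos hK h.le (by linarith)
    have h2 : x ^ (-ε) * x ^ (1 + ε) = x := by
      rw [← Real.rpow_add hx']; simp
    have h3 : x ^ (-ε) * x ^ (1 + ε) ≤ K ^ (-ε) * x ^ (1 + ε) := by gcongr
    linarith

/-- Rate stability plus a uniform `(1+ε)`-moment bound on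
`a(t) + b⁻(t)` (where `b⁻(t) = -min[b(t),0]`) implies mean rate stability. -/
theorem stmt1 {Ω : Type*} [MeasurableSpace Ω] (μ : Measure Ω) [IsProbabilityMeasure μ]
    (Q a b : ℕ → Ω → ℝ)
    (hQmeas : ∀ t, Measurable (Q t))
    (hameas : ∀ t, Measurable (a t)) (hbmeas : ∀ t, Measurable (b t))
    (hQ0 : ∀ ω, Q 0 ω = 0) (ha : ∀ t ω, 0 ≤ a t ω)
    (hrec : ∀ t ω, Q (t + 1) ω = max (Q t ω - b t ω) 0 + a t ω)
    (hrate : ∀ᵐ ω ∂μ, Tendsto (fun t : ℕ => Q t ω / t) atTop (nhds 0))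
    (ε C : ℝ) (hε : 0 < ε) (hC : 0 < C)
    (hmom : ∀ t, ∫⁻ ω, ENNReal.ofReal ((a t ω - min (b t ω) 0) ^ (1 + ε)) ∂μ ≤ ENNReal.ofReal C) :
    Tendsto (fun t : ℕ => (∫⁻ ω, ENNReal.ofReal (Q t ω) ∂μ) / (t : ℝ≥0∞)) atTop (nhds 0) := by
  have hX : ∀ t ω, 0 ≤ a t ω - min (b t ω) 0 := fun t ω => by
    have := min_le_right (b t ω) 0
    have := ha t ω
    linarith
  have hQnn : ∀ t ω, 0 ≤ Q t ω := by
    intro t ω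
    cases t with
    | zero => rw [hQ0]
    | succ n => rw [hrec]; exact add_nonneg (le_max_right _ _) (ha n ω)
  have hQb : ∀ K : ℝ, 0 < K → ∀ (t : ℕ) ω, Q t ω ≤ t * K +
      K ^ (-ε) * ∑ i ∈ range t, (a i ω - min (b i ω) 0) ^ (1 + ε) := by
    intro K hK t ω
    induction t with
    | zero => simp [hQ0]
    | succ n ih =>
      have h1 : Q (n + 1) ω ≤ Q n ω + (a n ω - min (b n ω) 0) := by
        rw [hrec]
        have := min_le_right (b n ω) 0
        have := min_le_left (b n ω) 0
        have := hQnn n ω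
        have : max (Q n ω - b n ω) 0 ≤ Q n ω - min (b n ω) 0 :=
          max_le (by linarith) (by linarith)
        linarith
      have h2 := aux_pt ε K _ hε hK (hX n ω)
      rw [sum_range_succ]
      push_cast
      linarith
  have hfm : ∀ i, Measurable (fun ω => ENNReal.ofReal ((a i ω - min (b i ω) 0) ^ (1 + ε))) := by
    intro i
    have := hameas i
    have := hbmeas i
    fun_prop
  have hmain : ∀ K : ℝ, 0 < K → ∀ t : ℕ, 0 < t →
      (∫⁻ ω, ENNReal.ofReal (Q t ω) ∂μ) / (t : ℝ≥0∞) ≤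
        (∫⁻ ω, ENNReal.ofReal (min (Q t ω / t) K) ∂μ) + ENNReal.ofReal (K ^ (-ε) * C) := by
    intro K hK t ht
    have ht' : (0 : ℝ) < t := by exact_mod_cast ht
    have hm : Measurable (fun ω => ENNReal.ofReal (min (Q t ω / t) K)) := by
      have := hQmeas t
      fun_prop
    have hpt : ∀ ω, ENNReal.ofReal (Q t ω) ≤ t * ENNReal.ofReal (min (Q t ω / t) K) +
        ENNReal.ofReal (K ^ (-ε)) *
          ∑ i ∈ range t, ENNReal.ofReal ((a i ω - min (b i ω) 0) ^ (1 + ε)) := by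
      intro ω
      have hs : 0 ≤ ∑ i ∈ range t, (a i ω - min (b i ω) 0) ^ (1 + ε) :=
        sum_nonneg fun i _ => Real.rpow_nonneg (hX i ω) _
      have hk : 0 ≤ K ^ (-ε) := by positivity
      have hmn : 0 ≤ min (Q t ω / t) K := le_min (div_nonneg (hQnn t ω) ht'.le) hK.le
      rw [← ENNReal.ofReal_sum_of_nonneg (fun i _ => Real.rpow_nonneg (hX i ω) _),
        ← ENNReal.ofReal_mul hk, ← ENNReal.ofReal_natCast t, ← ENNReal.ofReal_mul ht'.le,
        ← ENNReal.ofReal_add (mul_nonneg ht'.le hmn) (mul_nonneg hk hs)]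
      apply ENNReal.ofReal_le_ofReal
      rcases min_choice (Q t ω / t) K with h | h <;> rw [h]
      · rw [mul_div_cancel₀ _ ht'.ne']
        have := mul_nonneg hk hs
        linarith
      · exact hQb K hK t ω
    have ht0 : (t : ℝ≥0∞) ≠ 0 := by exact_mod_cast ht.ne'
    apply ENNReal.div_le_of_le_mul
    calc _ ≤ ∫⁻ ω, (t * ENNReal.ofReal (min (Q t ω / t) K) +
        ENNReal.ofReal (K ^ (-ε)) *
          ∑ i ∈ range t, ENNReal.ofReal ((a i ω - min (b i ω) 0) ^ (1 + ε))) ∂μ :=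
          lintegral_mono hpt
      _ = t * (∫⁻ ω, ENNReal.ofReal (min (Q t ω / t) K) ∂μ) + ENNReal.ofReal (K ^ (-ε)) *
          ∑ i ∈ range t, ∫⁻ ω, ENNReal.ofReal ((a i ω - min (b i ω) 0) ^ (1 + ε)) ∂μ := by
          rw [lintegral_add_left (hm.const_mul _), lintegral_const_mul _ hm,
            lintegral_const_mul _ (Finset.measurable_fun_sum _ fun i _ => hfm i),
            lintegral_finsetSum _ fun i _ => hfm i]
      _ ≤ t * (∫⁻ ω, ENNReal.ofReal (min (Q t ω / t) K) ∂μ) + ENNReal.ofReal (K ^ (-ε)) *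
          ∑ i ∈ range t, ENNReal.ofReal C := by
          gcongr with i _
          exact hmom i
      _ = _ := by
          rw [ENNReal.ofReal_mul (by positivity)]
          simp only [sum_const, card_range, nsmul_eq_mul]
          ring
  have hdom : ∀ K : ℝ, 0 < K →
      Tendsto (fun t : ℕ => ∫⁻ ω, ENNReal.ofReal (min (Q t ω / t) K) ∂μ) atTop (nhds 0) := by
    intro K hK
    have h := tendsto_lintegral_of_dominated_convergence (μ := μ)
      (F := fun (t : ℕ) ω => ENNReal.ofReal (min (Q t ω / t) K)) (f := fun _ => 0)
      (fun _ => ENNReal.ofReal K)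
      (fun t => by
        have := hQmeas t
        fun_prop)
      (fun t => Eventually.of_forall fun ω => ENNReal.ofReal_le_ofReal (min_le_right _ _))
      (by simp)
      (by
        filter_upwards [hrate] with ω hω
        have h1 : Tendsto (fun t : ℕ => min (Q t ω / t) K) atTop (nhds (min 0 K)) :=
          hω.min tendsto_const_nhds
        rw [min_eq_left hK.le] at h1
        simpa using ENNReal.tendsto_ofReal h1)
    simpa using h
  have hKlim : Tendsto (fun K : ℝ => ENNReal.ofReal (K ^ (-ε) * C)) atTop (nhds 0) := by
    simpa using ENNReal.tendsto_ofReal ((tendsto_rpow_neg_atTop hε).mul_const C)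
  rw [ENNReal.tendsto_nhds_zero] at hKlim ⊢
  intro δ hδ
  have hδ2 : 0 < δ / 2 := ENNReal.half_pos hδ.ne'
  obtain ⟨K, hK1, hK⟩ := ((hKlim (δ / 2) hδ2).and (eventually_gt_atTop 0)).exists
  filter_upwards [ENNReal.tendsto_nhds_zero.1 (hdom K hK) (δ / 2) hδ2, eventually_gt_atTop 0]
    with t h1 h2
  calc _ ≤ _ := hmain K hK t h2
    _ ≤ δ / 2 + δ / 2 := add_le_add h1 hK1
    _ = δ := ENNReal.add_halves δ
end

section
/- Let Q(t) be a discrete time queue with Q(t+1) = max[Q(t) − b(t), 0] + a(t), where a(t) ≥ 0 and b(t) is real-valued, defined on a probability space. Suppose Q(t) is rate stable, and suppose there exists a non-negative random variable Y with E[Y] < ∞ such that for all slots t and all real y, E[(a(t) + b⁻(t))·1{a(t) + b⁻(t) > y}] ≤ E[Y·1{Y > y}], where b⁻(t) = −min[b(t), 0]. Then Q(t) is mean rate stable. -/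
open MeasureTheory Filter Finset ENNReal

/-- Rate stability plus stochastic domination of the tails of
`a(t) + b⁻(t)` (where `b⁻(t) = -min[b(t),0]`) by an integrable nonnegative
random variable `Y`, in the sense that
`E[(a(t)+b⁻(t))·1{a(t)+b⁻(t) > y}] ≤ E[Y·1{Y > y}]` for all `t` and all real `y`,
implies mean rate stability. -/
theorem stmt2 {Ω : Type*} [MeasurableSpace Ω] (μ : Measure Ω) [IsProbabilityMeasure μ]
    (Q a b : ℕ → Ω → ℝ)
    (hQmeas : ∀ t, Measurable (Q t))
    (hameas : ∀ t, Measurable (a t)) (hbmeas : ∀ t, Measurable (b t))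
    (hQ0 : ∀ ω, Q 0 ω = 0) (ha : ∀ t ω, 0 ≤ a t ω)
    (hrec : ∀ t ω, Q (t + 1) ω = max (Q t ω - b t ω) 0 + a t ω)
    (hrate : ∀ᵐ ω ∂μ, Tendsto (fun t : ℕ => Q t ω / t) atTop (nhds 0))
    (Y : Ω → ℝ) (hYmeas : Measurable Y) (hYpos : ∀ ω, 0 ≤ Y ω)
    (hYfin : ∫⁻ ω, ENNReal.ofReal (Y ω) ∂μ < ⊤)
    (hdom : ∀ t, ∀ y : ℝ,
      ∫⁻ ω in {ω | a t ω - min (b t ω) 0 > y}, ENNReal.ofReal (a t ω - min (b t ω) 0) ∂μ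
        ≤ ∫⁻ ω in {ω | Y ω > y}, ENNReal.ofReal (Y ω) ∂μ) :
    Tendsto (fun t : ℕ => (∫⁻ ω, ENNReal.ofReal (Q t ω) ∂μ) / (t : ℝ≥0∞)) atTop (nhds 0) := by
  have hX0 : ∀ t ω, 0 ≤ a t ω - min (b t ω) 0 := fun t ω => by
    have := ha t ω
    have := min_le_right (b t ω) 0
    linarith
  have hQnn : ∀ t ω, 0 ≤ Q t ω := by
    intro t ω
    cases t with
    | zero => rw [hQ0]
    | succ n =>
      rw [hrec]
      exact add_nonneg (le_max_right _ _) (ha n ω)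
  have hstep : ∀ t ω, Q (t + 1) ω ≤ Q t ω + (a t ω - min (b t ω) 0) := by
    intro t ω
    rw [hrec]
    have h1 := min_le_right (b t ω) 0
    have h2 := min_le_left (b t ω) 0
    have h3 := hQnn t ω
    have : max (Q t ω - b t ω) 0 ≤ Q t ω - min (b t ω) 0 := max_le (by linarith) (by linarith)
    linarith
  -- tails
  let I : ℕ → ℕ → Ω → ℝ := fun M s ω =>
    Set.indicator {ω | a s ω - min (b s ω) 0 > (M : ℝ)} (fun ω => a s ω - min (b s ω) 0) ω
  have hI0 : ∀ M s ω, 0 ≤ I M s ω := fun M s ω =>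
    Set.indicator_nonneg (fun ω _ => hX0 s ω) ω
  have hXI : ∀ M s ω, a s ω - min (b s ω) 0 ≤ M + I M s ω := by
    intro M s ω
    by_cases h : a s ω - min (b s ω) 0 > (M : ℝ)
    · have : I M s ω = a s ω - min (b s ω) 0 := Set.indicator_of_mem (s := {ω | a s ω - min (b s ω) 0 > (M : ℝ)}) h _
      rw [this]
      have : (0 : ℝ) ≤ M := Nat.cast_nonneg M
      linarith
    · have := hI0 M s ω
      linarith
  have hsum : ∀ (M t : ℕ) ω, Q t ω ≤ t * M + ∑ s ∈ Finset.range t, I M s ω := by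
    intro M t ω
    induction t with
    | zero => simp [hQ0]
    | succ n ih =>
      rw [Finset.sum_range_succ]
      have := hstep n ω
      have := hXI M n ω
      push_cast
      linarith
  have hmS : ∀ (M s : ℕ), MeasurableSet {ω | a s ω - min (b s ω) 0 > (M : ℝ)} := fun M s =>
    measurableSet_lt measurable_const ((hameas s).sub ((hbmeas s).min measurable_const))
  have hIint : ∀ M s, ∫⁻ ω, ENNReal.ofReal (I M s ω) ∂μ
      ≤ ∫⁻ ω in {ω | Y ω > (M : ℝ)}, ENNReal.ofReal (Y ω) ∂μ := by
    intro M s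
    refine le_trans (le_of_eq ?_) (hdom s M)
    rw [← lintegral_indicator (hmS M s)]
    congr 1
    funext ω
    simp only [I, Set.indicator]
    split_ifs <;> simp
  have hImeas : ∀ M s, Measurable (I M s) := fun M s =>
    ((hameas s).sub ((hbmeas s).min measurable_const)).indicator (hmS M s)
  have hpt : ∀ (M t : ℕ) ω, 0 < t → ENNReal.ofReal (Q t ω) ≤
      t * ENNReal.ofReal (min (Q t ω / t) M) + ∑ s ∈ Finset.range t, ENNReal.ofReal (I M s ω) := by
    intro M t ω ht
    have ht' : (0 : ℝ) < t := Nat.cast_pos.mpr ht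
    have hS : 0 ≤ ∑ s ∈ Finset.range t, I M s ω := Finset.sum_nonneg fun s _ => hI0 M s ω
    have hm : 0 ≤ min (Q t ω / t) (M : ℝ) :=
      le_min (div_nonneg (hQnn t ω) ht'.le) (Nat.cast_nonneg M)
    rw [← ENNReal.ofReal_sum_of_nonneg (fun s _ => hI0 M s ω), ← ENNReal.ofReal_natCast t,
      ← ENNReal.ofReal_mul ht'.le, ← ENNReal.ofReal_add (mul_nonneg ht'.le hm) hS]
    apply ENNReal.ofReal_le_ofReal
    rcases min_choice (Q t ω / t) (M : ℝ) with h | h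
    · rw [h, mul_div_cancel₀ _ ht'.ne']
      linarith
    · rw [h]
      exact hsum M t ω
  have hmain : ∀ (M t : ℕ), 0 < t → (∫⁻ ω, ENNReal.ofReal (Q t ω) ∂μ) / (t : ℝ≥0∞) ≤
      (∫⁻ ω, ENNReal.ofReal (min (Q t ω / t) M) ∂μ)
        + ∫⁻ ω in {ω | Y ω > (M : ℝ)}, ENNReal.ofReal (Y ω) ∂μ := by
    intro M t ht
    apply ENNReal.div_le_of_le_mul
    calc ∫⁻ ω, ENNReal.ofReal (Q t ω) ∂μ
        ≤ ∫⁻ ω, (t * ENNReal.ofReal (min (Q t ω / t) M)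
          + ∑ s ∈ Finset.range t, ENNReal.ofReal (I M s ω)) ∂μ :=
            lintegral_mono fun ω => hpt M t ω ht
      _ = t * (∫⁻ ω, ENNReal.ofReal (min (Q t ω / t) M) ∂μ)
          + ∑ s ∈ Finset.range t, ∫⁻ ω, ENNReal.ofReal (I M s ω) ∂μ := by
            have hm1 : Measurable fun ω => ENNReal.ofReal (min (Q t ω / t) M) :=
              (((hQmeas t).div_const _).min measurable_const).ennreal_ofReal
            rw [lintegral_add_left (hm1.const_mul _), lintegral_const_mul _ hm1,
              lintegral_finsetSum _ (fun s _ => (hImeas M s).ennreal_ofReal)]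
      _ ≤ t * (∫⁻ ω, ENNReal.ofReal (min (Q t ω / t) M) ∂μ)
          + ∑ s ∈ Finset.range t, ∫⁻ ω in {ω | Y ω > (M : ℝ)}, ENNReal.ofReal (Y ω) ∂μ := by
            exact add_le_add le_rfl (Finset.sum_le_sum fun s _ => hIint M s)
      _ = _ := by
            rw [Finset.sum_const, Finset.card_range, nsmul_eq_mul]
            ring
  have hlim1 : ∀ M : ℕ, Tendsto (fun t : ℕ => ∫⁻ ω, ENNReal.ofReal (min (Q t ω / t) M) ∂μ)
      atTop (nhds 0) := by
    intro M
    have := tendsto_lintegral_of_dominated_convergence (μ := μ)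
      (F := fun (t : ℕ) ω => ENNReal.ofReal (min (Q t ω / t) M)) (f := fun _ => 0)
      (fun _ => ENNReal.ofReal M)
      (fun t => (((hQmeas t).div_const _).min measurable_const).ennreal_ofReal)
      (fun t => Eventually.of_forall fun ω => ENNReal.ofReal_le_ofReal (min_le_right _ _))
      (by simp) (by
        filter_upwards [hrate] with ω hω
        have h := ENNReal.tendsto_ofReal (hω.min (tendsto_const_nhds (x := (M : ℝ))))
        simpa using h)
    simpa using this
  have hlim2 : Tendsto (fun M : ℕ => ∫⁻ ω in {ω | Y ω > (M : ℝ)}, ENNReal.ofReal (Y ω) ∂μ)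
      atTop (nhds 0) := by
    have hms : ∀ M : ℕ, MeasurableSet {ω | Y ω > (M : ℝ)} := fun M =>
      measurableSet_lt measurable_const hYmeas
    have := tendsto_lintegral_of_dominated_convergence (μ := μ)
      (F := fun (M : ℕ) => Set.indicator {ω | Y ω > (M : ℝ)} fun ω => ENNReal.ofReal (Y ω))
      (f := fun _ => 0)
      (fun ω => ENNReal.ofReal (Y ω))
      (fun M => hYmeas.ennreal_ofReal.indicator (hms M))
      (fun M => Eventually.of_forall fun ω => Set.indicator_le_self _ _ ω)
      hYfin.ne (Eventually.of_forall fun ω => by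
        apply tendsto_const_nhds.congr'
        obtain ⟨N, hN⟩ := exists_nat_ge (Y ω)
        filter_upwards [eventually_ge_atTop N] with M hM
        symm
        apply Set.indicator_of_notMem
        have : (N : ℝ) ≤ M := Nat.cast_le.mpr hM
        simp only [Set.mem_ofPred_eq, not_lt, gt_iff_lt]
        linarith)
    simp only [lintegral_zero] at this
    refine this.congr fun M => ?_
    rw [lintegral_indicator (hms M)]
  rw [ENNReal.tendsto_nhds_zero]
  intro ε hε
  have hε2 : 0 < ε / 2 := ENNReal.half_pos hε.ne'
  obtain ⟨M, hM⟩ := (ENNReal.tendsto_nhds_zero.mp hlim2 (ε / 2) hε2).exists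
  filter_upwards [ENNReal.tendsto_nhds_zero.mp (hlim1 M) (ε / 2) hε2, eventually_gt_atTop 0]
    with t h1 h2
  calc _ ≤ _ := hmain M t h2
    _ ≤ ε / 2 + ε / 2 := add_le_add h1 hM
    _ = ε := ENNReal.add_halves ε
end
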